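/- arXiv:2312.14707 — 2 statements merged into one kernel-verified Lean document; each statement's English description precedes it below -/
import Mathlib

section
/- The even-dimensional sphere S^{2n} (for n ≥ 1) does not admit an almost para-complex structure; equivalently, its tangent bundle cannot be written as a Whitney sum of two rank-n subbundles. -/
open Bundle Module Manifold

/-!
Extended by zero to the normal bundle, an almost para-complex structure becomes a continuous family
`A` of endomorphisms of the ambient space with `A³ = A`. Its two eigenbundles are the ranges of the
idempotents `P = (A² + A) / 2` and `Q = (A² - A) / 2`, which satisfy `P Q = 0` and have tangent
values. Each closed hemisphere is contractible, so a nonzero subbundle has a section without zeros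
there. Extend such a section of the range of `P` from one hemisphere, and such a section of the
range of `Q` from the opposite one, to the whole sphere. The sum of the two is a tangent field, and
it vanishes nowhere: a zero would be a common zero of both summands, while at each point one of them
is nonzero. This contradicts the hairy ball theorem.

The hairy ball theorem is proved following Milnor. If `w` is the homogeneous extension of a smooth
unit tangent field, then `x + t w(x)` has norm `√(1 + t²) ‖x‖`, so for small `t` the map
`x ↦ x + t w(x)` carries the unit ball onto a ball of radius `√(1 + t²)`. The volume of this ball is
a multiple of `√(1 + t²) ^ d`, where `d` is the dimension of the ambient space. It is also the
integral of `det (1 + t Dw)` over the unit ball, a polynomial in `t`, which forces `d` to be even.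
-/

section SqrtOneAddSq

open Polynomial Filter Topology

theorem prime_one_add_X_sq : Prime (1 + X ^ 2 : ℝ[X]) := by
  have hdeg : (1 + X ^ 2 : ℝ[X]).natDegree = 2 := by compute_degree!
  refine (irreducible_of_degree_le_three_of_not_isRoot (by simp [hdeg]) fun t ht ↦ ?_).prime
  have : 1 + t ^ 2 = 0 := by simpa [IsRoot] using ht
  nlinarith [sq_nonneg t]

theorem even_of_associated_sq_pow {R : Type*} [CommMonoidWithZero R] [IsCancelMulZero R] {p q : R}
    {m : ℕ} (hp : Prime p) (h : Associated (q ^ 2) (p ^ m)) : Even m := by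
  obtain ⟨i, -, hi⟩ := (dvd_prime_pow hp m).1 ((dvd_pow_self q two_ne_zero).trans h.dvd)
  have hpow : Associated (p ^ (i * 2)) (p ^ m) := pow_mul p i 2 ▸ (hi.pow_pow (n := 2)).symm.trans h
  have : i * 2 = m := le_antisymm ((pow_dvd_pow_iff hp.ne_zero hp.not_isUnit).1 hpow.dvd)
    ((pow_dvd_pow_iff hp.ne_zero hp.not_isUnit).1 hpow.symm.dvd)
  exact ⟨i, by omega⟩

theorem even_of_eventually_eval_eq_mul_sqrt_pow {q : ℝ[X]} {a c : ℝ} (hc : c ≠ 0) {m : ℕ}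
    (h : ∀ᶠ t in 𝓝 a, q.eval t = c * √(1 + t ^ 2) ^ m) : Even m := by
  have hq : q ^ 2 = (1 + X ^ 2) ^ m * C (c ^ 2) := by
    refine eq_of_infinite_eval_eq _ _ (infinite_of_mem_nhds a (h.mono fun t ht ↦ ?_))
    have hsq : (√(1 + t ^ 2) ^ m) ^ 2 = (1 + t ^ 2) ^ m := by
      rw [← pow_mul, mul_comm, pow_mul, Real.sq_sqrt (by positivity)]
    simp [ht, mul_pow, hsq, mul_comm]
  refine even_of_associated_sq_pow prime_one_add_X_sq (q := q) (hq ▸ ?_)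
  exact associated_mul_unit_left _ _ (isUnit_C.2 (pow_ne_zero 2 hc).isUnit)

end SqrtOneAddSq

section DetOneAddSMul

open Polynomial Filter Topology MeasureTheory

variable {E : Type*} [NormedAddCommGroup E] [NormedSpace ℝ E]

theorem eventually_forall_det_one_add_smul_pos (K : ℝ) :
    ∀ᶠ t in 𝓝 (0 : ℝ), ∀ A : E →L[ℝ] E, ‖A‖ ≤ K → 0 < (1 + t • A).det := by
  have hcont : ContinuousAt (fun B : E →L[ℝ] E ↦ (1 + B).det) 0 :=
    (ContinuousLinearMap.continuous_det.comp (continuous_const.add continuous_id)).continuousAt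
  have hone : 0 < (1 + 0 : E →L[ℝ] E).det := by simp [ContinuousLinearMap.det]
  obtain ⟨ε, hε, hpos⟩ := Metric.eventually_nhds_iff.1 (hcont.eventually_const_lt hone)
  have hsmall : ∀ᶠ t in 𝓝 (0 : ℝ), ‖t‖ * K < ε :=
    ((continuous_norm.mul continuous_const).tendsto' 0 0 (by simp)).eventually_lt_const hε
  filter_upwards [hsmall] with t ht A hA
  refine hpos ?_
  rw [dist_zero_right, norm_smul]
  exact (mul_le_mul_of_nonneg_left hA (norm_nonneg t)).trans_lt ht

theorem eval_det_X_smul_map_C_add_map_C {R ι : Type*} [CommRing R] [Fintype ι] [DecidableEq ι]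
    (M N : Matrix ι ι R) (t : R) :
    ((X : R[X]) • M.map C + N.map C).det.eval t = (t • M + N).det := by
  rw [← coe_evalRingHom, RingHom.map_det]
  congr 1
  ext i j
  simp [mul_comm t]

theorem exists_polynomial_eval_eq_det_smul_add {R V : Type*} [CommRing R] [StrongRankCondition R]
    [AddCommGroup V] [Module R V] [Module.Free R V] [Module.Finite R V] (f g : V →ₗ[R] V) :
    ∃ p : R[X], p.natDegree ≤ finrank R V ∧ ∀ t, p.eval t = (t • f + g).det := by
  let b := finBasis R V
  refine ⟨(X • (LinearMap.toMatrix b b f).map C + (LinearMap.toMatrix b b g).map C).det,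
    (natDegree_det_X_add_C_le _ _).trans_eq (Fintype.card_fin _), fun t ↦ ?_⟩
  rw [eval_det_X_smul_map_C_add_map_C, ← LinearMap.det_toMatrix b, map_add, map_smul]

/-- Lagrange interpolation expresses the integral through finitely many of its values. -/
theorem exists_polynomial_eval_eq_integral {α : Type*} [MeasurableSpace α] {μ : Measure α}
    {p : α → ℝ[X]} {d : ℕ} (hd : ∀ x, (p x).natDegree ≤ d)
    (hint : ∀ t, Integrable (fun x ↦ (p x).eval t) μ) :
    ∃ q : ℝ[X], ∀ t, q.eval t = ∫ x, (p x).eval t ∂μ := by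
  let s := Finset.range (d + 1)
  let v : ℕ → ℝ := fun i ↦ i
  have hinterp (x : α) : p x = Lagrange.interpolate s v fun i ↦ (p x).eval (v i) :=
    Lagrange.eq_interpolate Nat.cast_injective.injOn <| by
      rw [Finset.card_range]
      exact (degree_le_of_natDegree_le (hd x)).trans_lt (Nat.cast_lt.2 d.lt_succ_self)
  refine ⟨Lagrange.interpolate s v fun i ↦ ∫ x, (p x).eval (v i) ∂μ, fun t ↦ ?_⟩
  calc (Lagrange.interpolate s v fun i ↦ ∫ x, (p x).eval (v i) ∂μ).eval t
      = ∑ i ∈ s, (∫ x, (p x).eval (v i) ∂μ) * (Lagrange.basis s v i).eval t := by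
        simp [Lagrange.interpolate_apply, eval_finsetSum]
    _ = ∫ x, ∑ i ∈ s, (p x).eval (v i) * (Lagrange.basis s v i).eval t ∂μ := by
        rw [integral_finsetSum _ fun i _ ↦ (hint _).mul_const _]
        simp only [integral_mul_const]
    _ = ∫ x, (p x).eval t ∂μ := by
        congr with x
        conv_rhs => rw [hinterp x, Lagrange.interpolate_apply, eval_finsetSum]
        simp

end DetOneAddSMul

section MilnorVolume

open Filter Topology MeasureTheory Metric Function
open scoped Pointwise NNReal

theorem bijective_id_add_of_lipschitzWith {E : Type*} [NormedAddCommGroup E] [NormedSpace ℝ E]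
    [CompleteSpace E] {g : E → E} {K : ℝ≥0} (hg : LipschitzWith K g) (hK : K < 1) :
    Bijective fun x ↦ x + g x := by
  have happ : ApproximatesLinearOn (fun x ↦ x + g x) (ContinuousLinearEquiv.refl ℝ E : E →L[ℝ] E)
      Set.univ K := fun x _ y _ ↦ by simpa [add_sub_add_comm] using hg.norm_sub_le x y
  have hKone : Subsingleton E ∨
      K < ‖((ContinuousLinearEquiv.refl ℝ E).symm : E →L[ℝ] E)‖₊⁻¹ := by
    refine (subsingleton_or_nontrivial E).imp_right fun (_ : Nontrivial E) ↦ ?_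
    have hone : ‖((ContinuousLinearEquiv.refl ℝ E).symm : E →L[ℝ] E)‖₊ = 1 :=
      NNReal.eq ContinuousLinearMap.norm_id
    rwa [hone, inv_one]
  exact ⟨Set.injOn_univ.1 (happ.injOn hKone), happ.surjective hKone⟩

variable {E : Type*} [NormedAddCommGroup E]

theorem image_ball_diff_zero_of_norm_eq_mul [NormedSpace ℝ E] {f : E → E} (hf : Surjective f)
    {r : ℝ} (hr : 0 < r) (hnorm : ∀ x, ‖f x‖ = r * ‖x‖) (ρ : ℝ) :
    f '' (ball 0 ρ \ {0}) = r • (ball 0 ρ \ {0}) := by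
  have hpre : f ⁻¹' (r • (ball 0 ρ \ {0})) = ball 0 ρ \ {0} := by
    ext x
    have hzero : f x = 0 ↔ x = 0 := by
      rw [← norm_eq_zero, hnorm, mul_eq_zero_iff_left hr.ne', norm_eq_zero]
    simp [Set.mem_smul_set_iff_inv_smul_mem₀ hr.ne', norm_smul, hnorm, hzero, hr.ne',
      abs_of_pos hr]
  rw [← hf.image_preimage (r • (ball 0 ρ \ {0})), hpre]

theorem integrableOn_det_one_add_smul_fderiv [NormedSpace ℝ E] [FiniteDimensional ℝ E]
    [MeasurableSpace E] [BorelSpace E] {μ : Measure E} {s : Set E} (hs : μ s ≠ ⊤) {w : E → E}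
    {K : ℝ≥0} (hw : LipschitzWith K w) (t : ℝ) :
    IntegrableOn (fun x ↦ (1 + t • fderiv ℝ w x).det) s μ := by
  have hcont : Continuous fun A : E →L[ℝ] E ↦ (1 + t • A).det :=
    ContinuousLinearMap.continuous_det.comp (by fun_prop)
  obtain ⟨C, hC⟩ := (isCompact_closedBall (0 : E →L[ℝ] E) K).exists_bound_of_continuousOn
    hcont.continuousOn
  refine Measure.integrableOn_of_bounded (M := C) hs
    (hcont.measurable.comp (measurable_fderiv ℝ w)).aestronglyMeasurable (ae_of_all _ fun x ↦ ?_)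
  exact hC _ (by simpa using norm_fderiv_le_of_lipschitz ℝ hw)

variable [InnerProductSpace ℝ E]

theorem norm_add_smul_of_inner_eq_zero {x w : E} (hw : ‖w‖ = ‖x‖) (ho : inner ℝ x w = 0) (t : ℝ) :
    ‖x + t • w‖ = √(1 + t ^ 2) * ‖x‖ := by
  have hxt : inner ℝ x (t • w) = 0 := by rw [inner_smul_right, ho, mul_zero]
  rw [norm_add_eq_sqrt_iff_real_inner_eq_zero.2 hxt, norm_smul, hw, Real.norm_eq_abs,
    mul_mul_mul_comm, abs_mul_abs_self, ← one_add_mul, ← sq, ← sq, Real.sqrt_mul (by positivity),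
    Real.sqrt_sq (norm_nonneg x)]

variable [FiniteDimensional ℝ E]

theorem integral_det_one_add_smul_fderiv [MeasurableSpace E] [BorelSpace E] (μ : Measure E)
    [μ.IsAddHaarMeasure] {w : E → E} {K : ℝ≥0} (hw : LipschitzWith K w)
    (hd : ∀ x ≠ 0, DifferentiableAt ℝ w x) (hn : ∀ x, ‖w x‖ = ‖x‖)
    (ho : ∀ x, inner ℝ x (w x) = 0) {t : ℝ} (ht : ‖t‖₊ * K < 1)
    (hpos : ∀ x, 0 < (1 + t • fderiv ℝ w x).det) :
    ∫ x in ball 0 1 \ {0}, (1 + t • fderiv ℝ w x).det ∂μ =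
      μ.real (ball 0 1 \ {0}) * √(1 + t ^ 2) ^ finrank ℝ E := by
  have hbij : Bijective fun x ↦ x + t • w x :=
    bijective_id_add_of_lipschitzWith ((lipschitzWith_smul t).comp hw) ht
  have hder : ∀ x ∈ ball (0 : E) 1 \ {0},
      HasFDerivWithinAt (fun x ↦ x + t • w x) (1 + t • fderiv ℝ w x) (ball 0 1 \ {0}) x :=
    fun x hx ↦ ((hasFDerivAt_id x).add ((hd x hx.2).hasFDerivAt.const_smul t)).hasFDerivWithinAt
  have himage : (fun x ↦ x + t • w x) '' (ball 0 1 \ {0}) = √(1 + t ^ 2) • (ball 0 1 \ {0}) :=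
    image_ball_diff_zero_of_norm_eq_mul hbij.surjective (by positivity)
      (fun x ↦ norm_add_smul_of_inner_eq_zero (hn x) (ho x) t) 1
  calc ∫ x in ball 0 1 \ {0}, (1 + t • fderiv ℝ w x).det ∂μ
      = ∫ x in ball 0 1 \ {0}, |(1 + t • fderiv ℝ w x).det| • (1 : ℝ) ∂μ := by
        simp only [abs_of_pos (hpos _), smul_eq_mul, mul_one]
    _ = ∫ _ in (fun x ↦ x + t • w x) '' (ball 0 1 \ {0}), (1 : ℝ) ∂μ :=
        (integral_image_eq_integral_abs_det_fderiv_smul μ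
          (measurableSet_ball.diff (measurableSet_singleton 0)) hder hbij.injective.injOn
          fun _ ↦ 1).symm
    _ = μ.real (√(1 + t ^ 2) • (ball (0 : E) 1 \ {0})) := by simp [himage]
    _ = μ.real (ball 0 1 \ {0}) * √(1 + t ^ 2) ^ finrank ℝ E := by
        rw [measureReal_def, Measure.addHaar_smul, ENNReal.toReal_mul, mul_comm, measureReal_def,
          abs_of_nonneg (by positivity), ENNReal.toReal_ofReal (by positivity)]

theorem even_finrank_of_lipschitzWith {w : E → E} {K : ℝ≥0} (hw : LipschitzWith K w)
    (hd : ∀ x ≠ 0, DifferentiableAt ℝ w x) (hn : ∀ x, ‖w x‖ = ‖x‖)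
    (ho : ∀ x, inner ℝ x (w x) = 0) : Even (finrank ℝ E) := by
  rcases subsingleton_or_nontrivial E with _ | _
  · simp [finrank_zero_of_subsingleton]
  borelize E
  let μ : Measure E := Measure.addHaar
  let s : Set E := ball 0 1 \ {0}
  have hfin : μ s ≠ ⊤ := ((measure_mono Set.sdiff_subset).trans_lt measure_ball_lt_top).ne
  have hpos : μ.real s ≠ 0 := by
    rw [measureReal_sdiff_null (by simp [measureReal_def]) (by simp)]
    exact ENNReal.toReal_ne_zero.2 ⟨(measure_ball_pos μ 0 one_pos).ne', measure_ball_lt_top.ne⟩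
  choose p hpdeg hp' using fun x ↦
    exists_polynomial_eval_eq_det_smul_add (fderiv ℝ w x : E →ₗ[ℝ] E) 1
  have hp (x : E) (t : ℝ) : (p x).eval t = (1 + t • fderiv ℝ w x).det := by
    rw [hp', add_comm]
    rfl
  obtain ⟨q, hq⟩ := exists_polynomial_eval_eq_integral (μ := μ.restrict s) hpdeg fun t ↦ by
    simp only [hp]
    exact integrableOn_det_one_add_smul_fderiv hfin hw t
  have hsmall : ∀ᶠ t : ℝ in 𝓝 0, ‖t‖₊ * K < 1 :=
    ((continuous_nnnorm.mul continuous_const).tendsto' 0 0 (by simp)).eventually_lt_const one_pos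
  refine even_of_eventually_eval_eq_mul_sqrt_pow (a := 0) (q := q) hpos ?_
  filter_upwards [hsmall, eventually_forall_det_one_add_smul_pos (E := E) K] with t ht hdet
  simpa only [hq, hp] using integral_det_one_add_smul_fderiv μ hw hd hn ho ht fun x ↦
    hdet (fderiv ℝ w x) (norm_fderiv_le_of_lipschitz ℝ hw)

end MilnorVolume

section HomogeneousExtension

open Metric NormedSpace
open scoped NNReal

variable {E F : Type*} [NormedAddCommGroup E] [NormedAddCommGroup F] [NormedSpace ℝ F]

section Normalize

variable [NormedSpace ℝ E]

theorem normalize_mem_sphere {x : E} (hx : x ≠ 0) : normalize x ∈ sphere (0 : E) 1 :=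
  mem_sphere_zero_iff_norm.2 (norm_normalize_eq_one_iff.2 hx)

theorem norm_normalize_le_one (x : E) : ‖normalize x‖ ≤ 1 := by
  rcases eq_or_ne x 0 with rfl | hx
  · simp
  · exact (norm_normalize_eq_one_iff.2 hx).le

theorem norm_mul_norm_normalize_sub_normalize_le (x y : E) :
    ‖y‖ * ‖normalize x - normalize y‖ ≤ 2 * ‖x - y‖ :=
  calc ‖y‖ * ‖normalize x - normalize y‖
      = ‖‖y‖ • normalize x - y‖ := by
        rw [← norm_norm y, ← norm_smul, norm_norm, smul_sub, norm_smul_normalize]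
    _ = ‖(‖y‖ - ‖x‖) • normalize x + (x - y)‖ := by
        rw [sub_smul, norm_smul_normalize x, sub_add_sub_cancel]
    _ ≤ |‖y‖ - ‖x‖| * ‖normalize x‖ + ‖x - y‖ :=
        (norm_add_le _ _).trans_eq (by rw [norm_smul, Real.norm_eq_abs])
    _ ≤ 2 * ‖x - y‖ := by
        rw [two_mul]
        gcongr
        refine (mul_le_of_le_one_right (abs_nonneg _) (norm_normalize_le_one x)).trans ?_
        rw [norm_sub_rev x]
        exact abs_norm_sub_norm_le y x

/-- The positively homogeneous map of degree one that agrees with `N` on the unit sphere. -/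
noncomputable def homogeneousExtension (N : E → F) (x : E) : F :=
  ‖x‖ • N (normalize x)

variable {N : E → F}

@[simp]
theorem homogeneousExtension_zero : homogeneousExtension N 0 = 0 := by
  simp [homogeneousExtension]

theorem norm_homogeneousExtension_le {C : ℝ} (hN : ∀ x ∈ sphere (0 : E) 1, ‖N x‖ ≤ C) (x : E) :
    ‖homogeneousExtension N x‖ ≤ C * ‖x‖ := by
  rcases eq_or_ne x 0 with rfl | hx
  · simp
  · rw [homogeneousExtension, norm_smul, norm_norm, mul_comm]
    gcongr
    exact hN _ (normalize_mem_sphere hx)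

theorem norm_homogeneousExtension (hN : ∀ x ∈ sphere (0 : E) 1, ‖N x‖ = 1) (x : E) :
    ‖homogeneousExtension N x‖ = ‖x‖ := by
  rcases eq_or_ne x 0 with rfl | hx
  · simp
  · rw [homogeneousExtension, norm_smul, norm_norm, hN _ (normalize_mem_sphere hx), mul_one]

theorem lipschitzWith_homogeneousExtension {C L : ℝ≥0}
    (hN : ∀ x ∈ sphere (0 : E) 1, ‖N x‖ ≤ C) (hL : LipschitzOnWith L N (sphere 0 1)) :
    LipschitzWith (C + 2 * L) (homogeneousExtension N) := by
  refine LipschitzWith.of_dist_le_mul fun x y ↦ ?_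
  rw [dist_eq_norm, dist_eq_norm]
  push_cast
  rcases eq_or_ne x 0 with rfl | hx
  · simpa using (norm_homogeneousExtension_le hN y).trans (by gcongr; simp)
  rcases eq_or_ne y 0 with rfl | hy
  · simpa using (norm_homogeneousExtension_le hN x).trans (by gcongr; simp)
  have hxy := hL.norm_sub_le (normalize_mem_sphere hx) (normalize_mem_sphere hy)
  calc ‖homogeneousExtension N x - homogeneousExtension N y‖
      = ‖(‖x‖ - ‖y‖) • N (normalize x) + ‖y‖ • (N (normalize x) - N (normalize y))‖ := by
        congr 1
        simp only [homogeneousExtension]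
        module
    _ ≤ |‖x‖ - ‖y‖| * C + ‖y‖ * (L * ‖normalize x - normalize y‖) := by
        refine (norm_add_le _ _).trans ?_
        rw [norm_smul, norm_smul, norm_norm, Real.norm_eq_abs]
        gcongr
        exact hN _ (normalize_mem_sphere hx)
    _ = |‖x‖ - ‖y‖| * C + L * (‖y‖ * ‖normalize x - normalize y‖) := by ring
    _ ≤ ‖x - y‖ * C + L * (2 * ‖x - y‖) := by
        gcongr ?_ * _ + _ * ?_
        exacts [abs_norm_sub_norm_le x y, norm_mul_norm_normalize_sub_normalize_le x y]
    _ = (C + 2 * L) * ‖x - y‖ := by ring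

end Normalize

variable [InnerProductSpace ℝ E]

theorem contDiffAt_normalize {n : WithTop ℕ∞} {x : E} (hx : x ≠ 0) :
    ContDiffAt ℝ n (normalize : E → E) x :=
  ((contDiffAt_norm ℝ hx).inv (norm_ne_zero_iff.2 hx)).smul contDiffAt_id

theorem differentiableAt_homogeneousExtension {N : E → F} {x : E} (hx : x ≠ 0)
    (hN : DifferentiableAt ℝ N (normalize x)) : DifferentiableAt ℝ (homogeneousExtension N) x :=
  (differentiableAt_id.norm ℝ hx).smul
    (hN.comp x ((contDiffAt_normalize hx).differentiableAt one_ne_zero))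

theorem inner_homogeneousExtension {N : E → E} (hN : ∀ x ∈ sphere (0 : E) 1, inner ℝ x (N x) = 0)
    (x : E) : inner ℝ x (homogeneousExtension N x) = 0 := by
  rcases eq_or_ne x 0 with rfl | hx
  · simp
  · nth_rw 1 [← norm_smul_normalize x, homogeneousExtension]
    rw [inner_smul_left, inner_smul_right, hN _ (normalize_mem_sphere hx), mul_zero, mul_zero]

end HomogeneousExtension

section HairyBall

open Metric NormedSpace
open scoped NNReal

variable {E : Type*} [NormedAddCommGroup E] [InnerProductSpace ℝ E] [FiniteDimensional ℝ E]

theorem even_finrank_of_contDiffAt_sphere {N : E → E}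
    (hN : ∀ x ∈ sphere (0 : E) 1, ContDiffAt ℝ 1 N x) (hn : ∀ x ∈ sphere (0 : E) 1, ‖N x‖ = 1)
    (ho : ∀ x ∈ sphere (0 : E) 1, inner ℝ x (N x) = 0) : Even (finrank ℝ E) := by
  obtain ⟨L, hL⟩ : ∃ L : ℝ≥0, LipschitzOnWith L N (sphere 0 1) := by
    refine LocallyLipschitzOn.exists_lipschitzOnWith_of_compact (isCompact_sphere 0 1) fun x hx ↦ ?_
    obtain ⟨K, t, ht, hK⟩ := (hN x hx).exists_lipschitzOnWith
    exact ⟨K, t, mem_nhdsWithin_of_mem_nhds ht, hK⟩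
  exact even_finrank_of_lipschitzWith
    (lipschitzWith_homogeneousExtension (C := 1) (fun x hx ↦ (hn x hx).le) hL)
    (fun x hx ↦ differentiableAt_homogeneousExtension hx
      ((hN _ (normalize_mem_sphere hx)).differentiableAt one_ne_zero))
    (norm_homogeneousExtension hn) (inner_homogeneousExtension ho)

theorem exists_contDiff_tangent_dist_lt {v : C(sphere (0 : E) 1, E)}
    (hv : ∀ x : sphere (0 : E) 1, inner ℝ (x : E) (v x) = 0) {ε : ℝ} (hε : 0 < ε) (n : ℕ∞) :
    ∃ u : E → E, ContDiff ℝ n u ∧ (∀ x ∈ sphere (0 : E) 1, inner ℝ x (u x) = 0) ∧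
      ∀ x : sphere (0 : E) 1, dist (u x) (v x) < ε := by
  obtain ⟨g, rfl⟩ := v.exists_restrict_eq isClosed_sphere
  obtain ⟨h, hh, hhg, -⟩ := g.continuous.exists_contDiff_approx n continuous_const fun _ ↦ hε
  refine ⟨fun x ↦ h x - inner ℝ x (h x) • x, hh.sub ((contDiff_id.inner ℝ hh).smul contDiff_id),
    fun x hx ↦ ?_, fun x ↦ ?_⟩
  · rw [inner_sub_right, inner_smul_right, inner_self_eq_one_of_norm_eq_one (by simpa using hx),
      mul_one, sub_self]
  · have hproj : h x - inner ℝ (x : E) (h x) • (x : E) - g x =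
        (ℝ ∙ (x : E))ᗮ.starProjection (h x - g x) := by
      have hgx : inner ℝ (x : E) (g x) = 0 := hv x
      rw [Submodule.starProjection_orthogonal_val,
        Submodule.starProjection_unit_singleton ℝ (norm_eq_of_mem_sphere x), inner_sub_right, hgx,
        sub_zero, sub_right_comm]
    calc dist (h x - inner ℝ (x : E) (h x) • (x : E)) (g x)
        = ‖(ℝ ∙ (x : E))ᗮ.starProjection (h x - g x)‖ := by rw [dist_eq_norm, hproj]
      _ ≤ dist (h x) (g x) := by
        rw [dist_eq_norm]
        exact Submodule.norm_starProjection_apply_le _ _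
      _ < ε := hhg x

/-- The **hairy ball theorem**. -/
theorem exists_eq_zero_of_odd_finrank (hodd : Odd (finrank ℝ E)) {v : C(sphere (0 : E) 1, E)}
    (hv : ∀ x : sphere (0 : E) 1, inner ℝ (x : E) (v x) = 0) : ∃ x, v x = 0 := by
  by_contra! hne
  have := nontrivial_of_finrank_pos hodd.pos
  have := (sphere_nonempty (x := (0 : E)).2 zero_le_one).to_subtype
  obtain ⟨z, hz⟩ := v.continuous.norm.exists_forall_le (by simp)
  obtain ⟨u, hu, hux, huv⟩ := exists_contDiff_tangent_dist_lt hv (norm_pos_iff.2 (hne z)) 1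
  have hu0 : ∀ x ∈ sphere (0 : E) 1, u x ≠ 0 := fun x hx h0 ↦ by
    have hlt := huv ⟨x, hx⟩
    rw [h0, dist_zero_left] at hlt
    exact hlt.not_ge (hz ⟨x, hx⟩)
  refine Nat.not_even_iff_odd.2 hodd (even_finrank_of_contDiffAt_sphere (N := normalize ∘ u)
    (fun x hx ↦ (contDiffAt_normalize (hu0 x hx)).comp x hu.contDiffAt)
    (fun x hx ↦ norm_normalize_eq_one_iff.2 (hu0 x hx)) fun x hx ↦ ?_)
  simp [NormedSpace.normalize, inner_smul_right, hux x hx]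

end HairyBall

section Idempotent

open Set
open scoped unitInterval

theorem eq_zero_of_isIdempotentElem_of_norm_lt_one {R : Type*} [NormedRing R] {a : R}
    (ha : IsIdempotentElem a) (hlt : ‖a‖ < 1) : a = 0 := by
  by_contra hne
  have hle : ‖a‖ ≤ ‖a‖ * ‖a‖ := by simpa only [ha.eq] using norm_mul_le a a
  exact hlt.not_ge ((le_mul_iff_one_le_left (norm_pos_iff.2 hne)).1 hle)

theorem eq_zero_of_isIdempotentElem_of_apply_eq_zero {X R : Type*} [TopologicalSpace X]
    [PreconnectedSpace X] [NormedRing R] {P : C(X, R)} (hP : IsIdempotentElem P) {x : X}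
    (hx : P x = 0) : P = 0 := by
  have hopen : {y | P y = 0} = {y | ‖P y‖ < 1} := by
    ext y
    refine ⟨fun hy ↦ ?_, eq_zero_of_isIdempotentElem_of_norm_lt_one (DFunLike.congr_fun hP y)⟩
    simp only [mem_ofPred_eq] at hy ⊢
    simpa only [hy, norm_zero] using one_pos (α := ℝ)
  have hclopen : IsClopen {y | P y = 0} :=
    ⟨isClosed_eq P.continuous continuous_const,
      hopen ▸ isOpen_lt P.continuous.norm continuous_const⟩
  ext1 y
  exact (hclopen.eq_univ ⟨x, hx⟩).ge (mem_univ y)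

variable {X Y F : Type*} [TopologicalSpace X] [TopologicalSpace Y] [NormedAddCommGroup F]
  [NormedSpace ℝ F]

/-- A family of idempotents `P` encodes the subbundle of `X × F` with fibres `range (P x)`; this
asserts that the subbundle has a continuous section without zeros. -/
def HasNonvanishingSection (P : C(X, F →L[ℝ] F)) : Prop :=
  ∃ s : C(X, F), ∀ x, P x (s x) = s x ∧ s x ≠ 0

theorem hasNonvanishingSection_const {p : F →L[ℝ] F} (hp : IsIdempotentElem p) (hne : p ≠ 0) :
    HasNonvanishingSection (.const X p) := by
  obtain ⟨v, hv⟩ := DFunLike.ne_iff.1 hne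
  exact ⟨.const X (p v), fun _ ↦ ⟨DFunLike.congr_fun hp v, hv⟩⟩

theorem HasNonvanishingSection.of_norm_sub_lt_one {P Q : C(X, F →L[ℝ] F)}
    (hP : HasNonvanishingSection P) (hQ : IsIdempotentElem Q) (hPQ : ∀ x, ‖P x - Q x‖ < 1) :
    HasNonvanishingSection Q := by
  obtain ⟨s, hs⟩ := hP
  refine ⟨⟨fun x ↦ Q x (s x), by fun_prop⟩, fun x ↦
    ⟨DFunLike.congr_fun (DFunLike.congr_fun hQ x) (s x), fun (hzero : Q x (s x) = 0) ↦ ?_⟩⟩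
  have hsub : (P x - Q x) (s x) = s x := by rw [sub_apply, (hs x).1, hzero, sub_zero]
  have hle : ‖s x‖ ≤ ‖P x - Q x‖ * ‖s x‖ := by
    simpa only [hsub] using (P x - Q x).le_opNorm (s x)
  exact (hPQ x).not_ge ((le_mul_iff_one_le_left (norm_pos_iff.2 (hs x).2)).1 hle)

theorem hasNonvanishingSection_iff_of_preconnectedSpace [CompactSpace X] {T : Type*}
    [TopologicalSpace T] [PreconnectedSpace T] {P : T → C(X, F →L[ℝ] F)} (hP : Continuous P)
    (hid : ∀ t, IsIdempotentElem (P t)) (t₀ t₁ : T) :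
    HasNonvanishingSection (P t₀) ↔ HasNonvanishingSection (P t₁) := by
  have hloc : IsLocallyConstant fun t ↦ HasNonvanishingSection (P t) := by
    refine (IsLocallyConstant.iff_eventually_eq _).2 fun t ↦ ?_
    have hunif := ContinuousMap.tendsto_iff_tendstoUniformly.1 (hP.tendsto t)
    filter_upwards [Metric.tendstoUniformly_iff.1 hunif 1 one_pos] with t' ht'
    simp only [dist_eq_norm] at ht'
    exact propext ⟨fun h ↦ h.of_norm_sub_lt_one (hid t) fun x ↦ norm_sub_rev (P t x) _ ▸ ht' x,
      fun h ↦ h.of_norm_sub_lt_one (hid t') ht'⟩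
  exact (hloc.apply_eq_of_preconnectedSpace t₀ t₁).to_iff

theorem isIdempotentElem_comp_right {R : Type*} [TopologicalSpace R] [Mul R] [ContinuousMul R]
    {P : C(Y, R)} (hP : IsIdempotentElem P) (f : C(X, Y)) : IsIdempotentElem (P.comp f) :=
  ContinuousMap.ext fun x ↦ DFunLike.congr_fun hP (f x)

theorem hasNonvanishingSection_comp_iff_of_homotopic [CompactSpace X] {P : C(Y, F →L[ℝ] F)}
    (hP : IsIdempotentElem P) {f g : C(X, Y)} (hfg : f.Homotopic g) :
    HasNonvanishingSection (P.comp f) ↔ HasNonvanishingSection (P.comp g) := by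
  obtain ⟨H⟩ := hfg
  simpa only [H.curry_zero, H.curry_one] using
    hasNonvanishingSection_iff_of_preconnectedSpace (P := fun t : I ↦ P.comp (H.curry t))
      (P.continuous_postcomp.comp H.curry.continuous) (fun t ↦ isIdempotentElem_comp_right hP _) 0 1

theorem exists_section_ne_zero_of_homotopic_const [FiniteDimensional ℝ F] [CompactSpace Y]
    [NormalSpace Y] {K : Set Y} (hK : IsClosed K) {y : Y}
    (hy : ContinuousMap.Homotopic ⟨((↑) : K → Y), continuous_subtype_val⟩ (.const K y))
    {P : C(Y, F →L[ℝ] F)} (hP : IsIdempotentElem P) (hPy : P y ≠ 0) :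
    ∃ s : C(Y, F), (∀ x, P x (s x) = s x) ∧ ∀ x ∈ K, s x ≠ 0 := by
  have : CompactSpace K := isCompact_iff_compactSpace.1 hK.isCompact
  obtain ⟨s, hs⟩ := (hasNonvanishingSection_comp_iff_of_homotopic hP hy).2
    (hasNonvanishingSection_const (DFunLike.congr_fun hP y) hPy)
  obtain ⟨g, rfl⟩ := s.exists_restrict_eq hK
  exact ⟨⟨fun x ↦ P x (g x), by fun_prop⟩,
    fun x ↦ DFunLike.congr_fun (DFunLike.congr_fun hP x) (g x),
    fun x hx ↦ (hs ⟨x, hx⟩).1.trans_ne (hs ⟨x, hx⟩).2⟩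

end Idempotent

section Sphere

open Metric

variable {E : Type*} [NormedAddCommGroup E]

theorem lineMap_ne_zero_of_norm_eq [NormedSpace ℝ E] {x y : E} (hx : x ≠ 0) (hxy : ‖x‖ = ‖y‖)
    (hne : x ≠ -y) {t : ℝ} (ht : t ∈ Set.Icc (0 : ℝ) 1) : AffineMap.lineMap x y t ≠ 0 := by
  intro hzero
  rw [AffineMap.lineMap_apply_module, add_eq_zero_iff_eq_neg, ← smul_neg] at hzero
  have hnorm : (1 - t) * ‖y‖ = t * ‖y‖ := by
    simpa [norm_smul, hxy, abs_of_nonneg ht.1, abs_of_nonneg (sub_nonneg.2 ht.2)] using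
      congrArg norm hzero
  have hhalf : 1 - t = t := mul_right_cancel₀ (hxy ▸ norm_ne_zero_iff.2 hx) hnorm
  have ht0 : t ≠ 0 := by
    rintro rfl
    norm_num at hhalf
  rw [hhalf] at hzero
  exact hne (smul_right_injective E ht0 hzero)

theorem homotopic_of_ne_neg [NormedSpace ℝ E] {X : Type*} [TopologicalSpace X]
    {f g : C(X, sphere (0 : E) 1)} (hfg : ∀ x, f x ≠ -g x) : f.Homotopic g := by
  let ι : C(sphere (0 : E) 1, E) := ⟨(↑), continuous_subtype_val⟩
  let H := ContinuousMap.Homotopy.affine (ι.comp f) (ι.comp g)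
  have hH (z) : H z ∈ ({0}ᶜ : Set E) :=
    lineMap_ne_zero_of_norm_eq (ne_zero_of_mem_unit_sphere _) (by simp)
      (fun h ↦ hfg z.2 (Subtype.ext h)) z.1.2
  exact ⟨{ toFun := fun z ↦ (homeomorphUnitSphereProd E ⟨H z, hH z⟩).1
           continuous_toFun := by fun_prop
           map_zero_left := fun x ↦ by ext; simp [H, ι]
           map_one_left := fun x ↦ by ext; simp [H, ι] }⟩

variable [InnerProductSpace ℝ E]

theorem homotopic_const_hemisphere (p : sphere (0 : E) 1) :
    ContinuousMap.Homotopic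
      ⟨((↑) : {x : sphere (0 : E) 1 | 0 ≤ inner ℝ (p : E) x} → sphere (0 : E) 1),
        continuous_subtype_val⟩ (.const _ p) := by
  refine homotopic_of_ne_neg ?_
  rintro ⟨x, hx⟩ (rfl : x = -p)
  norm_num [inner_neg_right] at hx

theorem one_lt_finrank_of_inner_eq_zero [FiniteDimensional ℝ E] {x y : E} (hx : x ≠ 0)
    (hy : y ≠ 0) (hxy : inner ℝ x y = 0) : 1 < finrank ℝ E := by
  have hli : LinearIndependent ℝ ![x, y] := by
    refine linearIndependent_of_ne_zero_of_inner_eq_zero (𝕜 := ℝ) ?_ ?_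
    · simp [Fin.forall_fin_two, hx, hy]
    · intro i j hij
      fin_cases i <;> fin_cases j <;> simp_all [real_inner_comm]
  simpa [Nat.succ_le_iff] using hli.fintype_card_le_finrank

theorem eq_zero_or_eq_zero_of_tangent [FiniteDimensional ℝ E] (hodd : Odd (finrank ℝ E))
    {P Q : C(sphere (0 : E) 1, E →L[ℝ] E)} (hP : IsIdempotentElem P) (hQ : IsIdempotentElem Q)
    (hPQ : P * Q = 0) (hPt : ∀ x : sphere (0 : E) 1, ∀ v, inner ℝ (x : E) (P x v) = 0)
    (hQt : ∀ x : sphere (0 : E) 1, ∀ v, inner ℝ (x : E) (Q x v) = 0) : P = 0 ∨ Q = 0 := by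
  by_contra! ⟨hPne, hQne⟩
  obtain ⟨p, hp⟩ := DFunLike.ne_iff.1 hPne
  obtain ⟨v, hv⟩ := DFunLike.ne_iff.1 hp
  have hrank : 1 < Module.rank ℝ E := Module.lt_rank_of_lt_finrank <|
    one_lt_finrank_of_inner_eq_zero (ne_zero_of_mem_unit_sphere p) hv (hPt p v)
  have := Subtype.preconnectedSpace (isPreconnected_sphere hrank (0 : E) 1)
  have hclosed (q : sphere (0 : E) 1) : IsClosed {x : sphere (0 : E) 1 | 0 ≤ inner ℝ (q : E) x} :=
    isClosed_le continuous_const (by fun_prop)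
  obtain ⟨s, hPs, hs⟩ := exists_section_ne_zero_of_homotopic_const (hclosed p)
    (homotopic_const_hemisphere p) hP hp
  obtain ⟨w, hQw, hw⟩ := exists_section_ne_zero_of_homotopic_const (hclosed (-p))
    (homotopic_const_hemisphere (-p)) hQ fun hzero ↦
      hQne (eq_zero_of_isIdempotentElem_of_apply_eq_zero hQ hzero)
  obtain ⟨x, hx⟩ := exists_eq_zero_of_odd_finrank hodd (v := s + w) fun x ↦ by
    rw [ContinuousMap.add_apply, inner_add_right, ← hPs, ← hQw, hPt, hQt, add_zero]
  have hsw : s x + w x = 0 := hx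
  have hPw : P x (w x) = 0 := by
    rw [← hQw]
    exact DFunLike.congr_fun (DFunLike.congr_fun hPQ x) (w x)
  have hsx : s x = 0 := by simpa [hPs, hPw] using congrArg (P x) hsw
  have hwx : w x = 0 := by rwa [hsx, zero_add] at hsw
  rcases le_total 0 (inner ℝ (p : E) (x : E)) with h | h
  · exact hs x h hsx
  · exact hw x (by simpa using h) hwx

end Sphere

section Tripotent

variable (K : Type*) {A : Type*} [Field K] [Ring A] [Algebra K A] {a : A}

theorem isIdempotentElem_half_sq_add [NeZero (2 : K)] (ha : a * a * a = a) :
    IsIdempotentElem ((2⁻¹ : K) • (a * a + a)) := by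
  have hmul : (a * a + a) * (a * a + a) = (2 : K) • (a * a + a) := by
    simp only [mul_add, add_mul, ← mul_assoc, ha, two_smul]
    abel
  rw [IsIdempotentElem, smul_mul_smul_comm, hmul, smul_smul,
    inv_mul_cancel_right₀ two_ne_zero]

theorem half_sq_add_mul_half_sq_sub (ha : a * a * a = a) :
    ((2⁻¹ : K) • (a * a + a)) * ((2⁻¹ : K) • (a * a - a)) = 0 := by
  have hmul : (a * a + a) * (a * a - a) = 0 := by
    simp only [mul_sub, add_mul, ← mul_assoc, ha]
    abel
  rw [smul_mul_smul_comm, hmul, smul_zero]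

theorem isIdempotentElem_half_sq_sub [NeZero (2 : K)] (ha : a * a * a = a) :
    IsIdempotentElem ((2⁻¹ : K) • (a * a - a)) := by
  simpa only [neg_mul_neg, ← sub_eq_add_neg] using
    isIdempotentElem_half_sq_add K (a := -a) (by rw [neg_mul_neg, mul_neg, ha])

end Tripotent

section AmbientEndomorphism

variable {E H M F : Type*} [NormedAddCommGroup E] [NormedSpace ℝ E] [TopologicalSpace H]
  {I : ModelWithCorners ℝ E H} [TopologicalSpace M] [ChartedSpace H M]
  [NormedAddCommGroup F] [NormedSpace ℝ F] {ι : M → F} {r : F → M}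

variable [FiniteDimensional ℝ F]

variable (ι r) in
/-- The endomorphism of the ambient space `F` at `y` which a family `T` of endomorphisms of the
tangent spaces of `M` induces through `ι : M → F` and a retraction `r : F → M`. -/
noncomputable def ambientEndomorphism (T : ∀ x : M, TangentSpace I x →ₗ[ℝ] TangentSpace I x)
    (y : F) : F →L[ℝ] F :=
  LinearMap.toContinuousLinearMap ((d% ι (r y)).toLinearMap ∘ₗ T (r y) ∘ₗ
    (mfderiv 𝓘(ℝ, F) I r y).toLinearMap : F →ₗ[ℝ] F)

variable {T : ∀ x : M, TangentSpace I x →ₗ[ℝ] TangentSpace I x}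

theorem exists_ambientEndomorphism_apply_eq (hr : Function.LeftInverse r ι) (x : M) (v : F) :
    ∃ w, ambientEndomorphism ι r T (ι x) v = d% ι x (T x w) := by
  have heq (z : M) (hz : z = x) (w : TangentSpace I z) :
      ∃ w', d% ι z (T z w) = d% ι x (T x w') := by
    subst hz
    exact ⟨w, rfl⟩
  exact heq _ (hr x) _

theorem ambientEndomorphism_mvfderiv (hr : Function.LeftInverse r ι) {x : M}
    (hrd : MDifferentiableAt 𝓘(ℝ, F) I r (ι x)) (hιd : MDifferentiableAt I 𝓘(ℝ, F) ι x)
    (v : TangentSpace I x) :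
    ambientEndomorphism ι r T (ι x) (d% ι x v) = d% ι x (T x v) := by
  have heq (z : M) (hz : z = x) (w : E) : d% ι z (T z w) = d% ι x (T x w) := by
    subst hz
    rfl
  have hrι : mfderiv 𝓘(ℝ, F) I r (ι x) (mfderiv I 𝓘(ℝ, F) ι x v) = v := by
    rw [← mfderiv_comp_apply x hrd hιd, hr.comp_eq_id, mfderiv_id]
    rfl
  exact (heq _ (hr x) _).trans (congrArg (fun w : E ↦ d% ι x (T x w)) hrι)

theorem continuousOn_ambientEndomorphism [IsManifold I 1 M]
    (hι : ContMDiff I 𝓘(ℝ, F) 1 ι) {U : Set F} (hU : IsOpen U) (hrU : ContMDiffOn 𝓘(ℝ, F) I 1 r U)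
    (hT : Continuous fun p : TangentBundle I M ↦
      (TotalSpace.mk p.proj (T p.proj p.2) : TangentBundle I M)) :
    ContinuousOn (ambientEndomorphism ι r T) U := by
  refine continuousOn_clm_apply.2 fun v ↦ ?_
  have hconst : Continuous fun y : F ↦ (TotalSpace.mk y v : TangentBundle 𝓘(ℝ, F) F) :=
    (tangentBundleModelSpaceHomeomorph 𝓘(ℝ, F)).symm.continuous.comp
      (continuous_id.prodMk continuous_const)
  have hdr : ContinuousOn (fun y ↦ (⟨r y, mfderiv 𝓘(ℝ, F) I r y v⟩ : TangentBundle I M)) U := by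
    refine ((hrU.continuousOn_tangentMapWithin le_rfl hU.uniqueMDiffOn).comp hconst.continuousOn
      fun y hy ↦ hy).congr fun y hy ↦ ?_
    simp only [Function.comp_apply, tangentMapWithin, mfderivWithin_of_isOpen hU hy]
  have hdι : Continuous fun p : TangentBundle I M ↦ d% ι p.proj p.2 :=
    continuous_snd.comp ((tangentBundleModelSpaceHomeomorph 𝓘(ℝ, F)).continuous.comp
      (hι.continuous_tangentMap le_rfl))
  exact (hdι.comp hT).comp_continuousOn hdr

end AmbientEndomorphism

section SphereRetraction

open Metric NormedSpace

variable {E : Type*} [NormedAddCommGroup E] [InnerProductSpace ℝ E]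

theorem exists_leftInverse_sphere_coe_contMDiffOn {n : ℕ} [Fact (finrank ℝ E = n + 1)] :
    ∃ r : E → sphere (0 : E) 1, Function.LeftInverse r (↑) ∧
      ContMDiffOn 𝓘(ℝ, E) (𝓡 n) 1 r {0}ᶜ := by
  have : Nontrivial E := nontrivial_of_finrank_eq_succ (Fact.out : finrank ℝ E = n + 1)
  obtain ⟨p, hp⟩ := NormedSpace.sphere_nonempty (x := (0 : E)).2 zero_le_one
  let U : TopologicalSpace.Opens E := ⟨{0}ᶜ, isOpen_compl_singleton⟩
  have hU : ContMDiff 𝓘(ℝ, E) 𝓘(ℝ, E) 1 fun y : U ↦ normalize (y : E) := fun y ↦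
    contMDiffAt_subtype_iff.2 (contDiffAt_normalize y.2).contMDiffAt
  let ρ : U → sphere (0 : E) 1 := Set.codRestrict _ _ fun y ↦ normalize_mem_sphere y.2
  let r : E → sphere (0 : E) 1 := Function.extend (↑) ρ fun _ ↦ ⟨p, hp⟩
  have hr (y : U) : r y = ρ y := Subtype.val_injective.extend_apply _ _ y
  refine ⟨r, fun x ↦ ?_, fun y hy ↦ ?_⟩
  · ext1
    rw [hr ⟨x, ne_zero_of_mem_unit_sphere x⟩]
    exact normalize_eq_self_of_norm_eq_one (norm_eq_of_mem_sphere x)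
  · refine (contMDiffAt_subtype_iff (U := U) (x := ⟨y, hy⟩).1 ?_).contMDiffWithinAt
    simpa only [hr] using (hU.codRestrict_sphere _).contMDiffAt

end SphereRetraction

section TangentTripotent

open Metric

variable {E : Type*} [NormedAddCommGroup E] [InnerProductSpace ℝ E]

theorem mul_self_eq_or_eq_neg_of_tangent [FiniteDimensional ℝ E] (hodd : Odd (finrank ℝ E))
    {A : C(sphere (0 : E) 1, E →L[ℝ] E)} (hA : A * A * A = A)
    (hAt : ∀ x : sphere (0 : E) 1, ∀ v, inner ℝ (x : E) (A x v) = 0) :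
    A * A = A ∨ A * A = -A := by
  -- A shortcut: the search for the ring structure on `C(sphere 0 1, E →L[ℝ] E)` is too deep.
  have : IsTopologicalRing (E →L[ℝ] E) := inferInstance
  have hhalf : IsUnit (2⁻¹ : ℝ) := .mk0 _ (by norm_num)
  refine (eq_zero_or_eq_zero_of_tangent hodd (isIdempotentElem_half_sq_add ℝ hA)
    (isIdempotentElem_half_sq_sub ℝ hA) (half_sq_add_mul_half_sq_sub ℝ (a := A) hA)
    (fun x v ↦ ?_) fun x v ↦ ?_).symm.imp
      (fun h ↦ sub_eq_zero.1 (hhalf.smul_eq_zero.1 h))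
      fun h ↦ eq_neg_of_add_eq_zero_left (hhalf.smul_eq_zero.1 h)
  · change inner ℝ (x : E) ((2⁻¹ : ℝ) • (A x (A x v) + A x v)) = 0
    simp [inner_smul_right, inner_add_right, hAt]
  · change inner ℝ (x : E) ((2⁻¹ : ℝ) • (A x (A x v) - A x v)) = 0
    simp [inner_smul_right, inner_sub_right, hAt]

variable {n : ℕ} [Fact (finrank ℝ E = n + 1)]
  {T : ∀ x : sphere (0 : E) 1, TangentSpace (𝓡 n) x →ₗ[ℝ] TangentSpace (𝓡 n) x}

theorem exists_continuousMap_apply_mvfderiv_sphere_coe_eq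
    (hcont : Continuous fun p : TangentBundle (𝓡 n) (sphere (0 : E) 1) ↦
      (TotalSpace.mk p.proj (T p.proj p.2) : TangentBundle (𝓡 n) (sphere (0 : E) 1))) :
    ∃ A : C(sphere (0 : E) 1, E →L[ℝ] E),
      (∀ x v, A x (mvfderiv (𝓡 n) Subtype.val x v) = mvfderiv (𝓡 n) Subtype.val x (T x v)) ∧
      ∀ x v, ∃ w, A x v = mvfderiv (𝓡 n) Subtype.val x (T x w) := by
  have : FiniteDimensional ℝ E := .of_fact_finrank_eq_succ n
  have hι : ContMDiff (𝓡 n) 𝓘(ℝ, E) 1 ((↑) : sphere (0 : E) 1 → E) := contMDiff_coe_sphere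
  have hι0 (x : sphere (0 : E) 1) : (x : E) ∈ ({0}ᶜ : Set E) := ne_zero_of_mem_unit_sphere x
  obtain ⟨r, hr, hrs⟩ := exists_leftInverse_sphere_coe_contMDiffOn (E := E) (n := n)
  have hrd (x : sphere (0 : E) 1) : MDifferentiableAt 𝓘(ℝ, E) (𝓡 n) r x :=
    (hrs.contMDiffAt (isOpen_compl_singleton.mem_nhds (hι0 x))).mdifferentiableAt one_ne_zero
  let A : C(sphere (0 : E) 1, E →L[ℝ] E) := ⟨ambientEndomorphism Subtype.val r T ∘ Subtype.val,
    (continuousOn_ambientEndomorphism hι isOpen_compl_singleton hrs hcont).comp_continuous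
      hι.continuous hι0⟩
  exact ⟨A, fun x ↦ ambientEndomorphism_mvfderiv hr (hrd x) (hι.mdifferentiableAt one_ne_zero),
    exists_ambientEndomorphism_apply_eq hr⟩

theorem comp_self_eq_or_eq_neg_of_tangentBundle_sphere (hn : Even n)
    (hcont : Continuous fun p : TangentBundle (𝓡 n) (sphere (0 : E) 1) ↦
      (TotalSpace.mk p.proj (T p.proj p.2) : TangentBundle (𝓡 n) (sphere (0 : E) 1)))
    (hT : ∀ x v, T x (T x (T x v)) = T x v) :
    (∀ x v, T x (T x v) = T x v) ∨ ∀ x v, T x (T x v) = -T x v := by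
  have hfin : finrank ℝ E = n + 1 := Fact.out
  have : FiniteDimensional ℝ E := .of_fact_finrank_eq_succ n
  obtain ⟨A, hA, hrange⟩ := exists_continuousMap_apply_mvfderiv_sphere_coe_eq hcont
  have hAAA : A * A * A = A := by
    ext x v
    obtain ⟨w, hw⟩ := hrange x v
    change A x (A x (A x v)) = A x v
    rw [hw, hA, hA, hT]
  have hAt (x : sphere (0 : E) 1) (v : E) : inner ℝ (x : E) (A x v) = 0 := by
    obtain ⟨w, hw⟩ := hrange x v
    rw [hw, ← Submodule.mem_orthogonal_singleton_iff_inner_right,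
      ← range_mvfderiv_subtypeVal (n := n)]
    exact LinearMap.mem_range_self _ _
  refine (mul_self_eq_or_eq_neg_of_tangent (hfin ▸ hn.add_one) hAAA hAt).imp
    (fun h x v ↦ injective_mvfderiv_subtypeVal_sphere x ?_)
    fun h x v ↦ injective_mvfderiv_subtypeVal_sphere x ?_
  · rw [← hA, ← hA]
    exact DFunLike.congr_fun (DFunLike.congr_fun h x) _
  · rw [map_neg, ← hA, ← hA]
    exact DFunLike.congr_fun (DFunLike.congr_fun h x) _

theorem sphere_no_almost_paracomplex_general (hn : Even n) :
    ¬ ∃ I : ∀ x : sphere (0 : E) 1, TangentSpace (𝓡 n) x →ₗ[ℝ] TangentSpace (𝓡 n) x,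
      Continuous (fun p : TangentBundle (𝓡 n) (sphere (0 : E) 1) ↦
        (TotalSpace.mk p.proj (I p.proj p.2) : TangentBundle (𝓡 n) (sphere (0 : E) 1))) ∧
      (∀ x v, I x (I x (I x v)) = I x v) ∧
      (∃ x, End.HasEigenvalue (I x) 1) ∧ ∃ x, End.HasEigenvalue (I x) (-1) := by
  rintro ⟨I, hcont, hI, ⟨x, hx⟩, ⟨y, hy⟩⟩
  obtain ⟨u, hu⟩ := hx.exists_hasEigenvector
  obtain ⟨w, hw⟩ := hy.exists_hasEigenvector
  rcases comp_self_eq_or_eq_neg_of_tangentBundle_sphere hn hcont hI with h | h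
  · have hone : (1 : ℝ) = -1 :=
      smul_left_injective ℝ hw.2 (by simpa [hw.apply_eq_smul] using h y w)
    norm_num at hone
  · have hone : (1 : ℝ) = -1 :=
      smul_left_injective ℝ hu.2 (by simpa [hu.apply_eq_smul] using h x u)
    norm_num at hone

end TangentTripotent

theorem hasEigenvalue_of_finrank_eigenspace_pos {K V : Type*} [Field K] [AddCommGroup V]
    [Module K V] {f : End K V} {μ : K} (h : 0 < finrank K (f.eigenspace μ)) : f.HasEigenvalue μ :=
  End.hasEigenvalue_iff.2 (Submodule.nontrivial_iff_ne_bot.1 (nontrivial_of_finrank_pos h))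

/-- The even-dimensional sphere `S^{2n}` (for `n ≥ 1`) does not admit an almost
para-complex structure: there is no continuous `(1,1)`-tensor `I` with `I² = id` whose
`(+1)`- and `(−1)`-eigenspaces are both `n`-dimensional at every point; equivalently,
the tangent bundle of `S^{2n}` cannot be written as a Whitney sum of two rank-`n`
subbundles. -/
theorem sphere_no_almost_paracomplex (n : ℕ) (hn : 1 ≤ n)
    [Fact (finrank ℝ (EuclideanSpace ℝ (Fin (2 * n + 1))) = 2 * n + 1)] :
    ¬ ∃ I : ∀ x : Metric.sphere (0 : EuclideanSpace ℝ (Fin (2 * n + 1))) 1,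
        TangentSpace (𝓡 (2 * n)) x →ₗ[ℝ] TangentSpace (𝓡 (2 * n)) x,
      Continuous (fun p : TangentBundle (𝓡 (2 * n))
            (Metric.sphere (0 : EuclideanSpace ℝ (Fin (2 * n + 1))) 1) =>
          (TotalSpace.mk p.proj (I p.proj p.2) : TangentBundle (𝓡 (2 * n))
            (Metric.sphere (0 : EuclideanSpace ℝ (Fin (2 * n + 1))) 1))) ∧
      (∀ x, (I x) ∘ₗ (I x) = LinearMap.id) ∧
      (∀ x, finrank ℝ ↥(Module.End.eigenspace (I x : Module.End ℝ (TangentSpace (𝓡 (2 * n)) x)) 1) = n) ∧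
      (∀ x, finrank ℝ ↥(Module.End.eigenspace (I x : Module.End ℝ (TangentSpace (𝓡 (2 * n)) x)) (-1)) = n) := by
  rintro ⟨I, hcont, hI, h1, h2⟩
  obtain ⟨x, hx⟩ := (NormedSpace.sphere_nonempty
    (x := (0 : EuclideanSpace ℝ (Fin (2 * n + 1))))).2 zero_le_one
  exact sphere_no_almost_paracomplex_general (even_two_mul n) ⟨I, hcont,
    fun x v ↦ DFunLike.congr_fun (hI x) (I x v),
    ⟨⟨x, hx⟩, hasEigenvalue_of_finrank_eigenspace_pos (hn.trans_eq (h1 _).symm)⟩,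
    ⟨x, hx⟩, hasEigenvalue_of_finrank_eigenspace_pos (hn.trans_eq (h2 _).symm)⟩
end

section
/- In the quadratic extension 𝔡 = 𝔰𝔩(2,ℝ) ⊕ 𝔰𝔩(2,ℝ)* with involution θ(α+x) = σ*(α) + σ(x), where σ = diag(1,−1,−1), let 𝔥 = span{e₁,η₁} and 𝔫 = span{e₂,e₃,η₂,η₃} be the ±1-eigenspaces of θ. Then the endomorphism J := ad_Z of 𝔫, where Z = e₁ − cη₁, satisfies J² = id on 𝔫 and ⟨JX,Y⟩ + ⟨X,JY⟩ = 0 for all X,Y ∈ 𝔫; hence (𝔡, 𝔥, θ) with J and ⟨,⟩|_𝔫 is a non-semisimple para-Hermitian symmetric system. -/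
open Finset

/-- The quadratic extension `𝔡 = 𝔰𝔩(2,ℝ) ⊕ 𝔰𝔩(2,ℝ)*`, encoded by coordinates: the
first factor carries the coordinates with respect to the basis `{e₁,e₂,e₃}` of
`𝔰𝔩(2,ℝ)` (with `[e₁,e₂] = e₃`, `[e₁,e₃] = e₂`, `[e₂,e₃] = e₁`), the second the
coordinates with respect to the dual basis `{η₁,η₂,η₃}`. -/
abbrev Dalg := (Fin 3 → ℝ) × (Fin 3 → ℝ)

/-- The bracket of `𝔰𝔩(2,ℝ)` in the basis `{e₁,e₂,e₃}`. -/
def slBr (u v : Fin 3 → ℝ) : Fin 3 → ℝ :=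
  ![u 1 * v 2 - u 2 * v 1, u 0 * v 2 - u 2 * v 0, u 0 * v 1 - u 1 * v 0]

/-- The coadjoint action terms `[ηᵢ,eⱼ]`: `[η₁,e₂] = η₃`, `[η₁,e₃] = −η₂`,
`[η₂,e₁] = η₃`, `[η₂,e₃] = −η₁`, `[η₃,e₁] = η₂`, `[η₃,e₂] = −η₁`. -/
def coadBr (a v : Fin 3 → ℝ) : Fin 3 → ℝ :=
  ![-(a 1 * v 2) - a 2 * v 1, -(a 0 * v 2) + a 2 * v 0, a 0 * v 1 + a 1 * v 0]

/-- The bracket of the quadratic extension `𝔡`: `[e₁,e₂] = e₃ + cη₃`,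
`[e₁,e₃] = e₂ − cη₂`, `[e₂,e₃] = e₁ + cη₁`, together with the coadjoint action of
`𝔰𝔩(2,ℝ)` on `𝔰𝔩(2,ℝ)*`, and `𝔰𝔩(2,ℝ)*` abelian. -/
def dBr (c : ℝ) (x y : Dalg) : Dalg :=
  (slBr x.1 y.1,
    c • ![x.1 1 * y.1 2 - x.1 2 * y.1 1, -(x.1 0 * y.1 2 - x.1 2 * y.1 0),
        x.1 0 * y.1 1 - x.1 1 * y.1 0]
      + coadBr x.2 y.1 - coadBr y.2 x.1)

/-- The symmetric bilinear form `⟨α₁+x₁, α₂+x₂⟩ = α₁(x₂) + α₂(x₁)` on `𝔡`. -/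
def dForm (x y : Dalg) : ℝ := (∑ i, x.2 i * y.1 i) + (∑ i, y.2 i * x.1 i)

/-- The element `Z = e₁ − cη₁ ∈ 𝔥 = span{e₁,η₁}`. -/
def Zelt (c : ℝ) : Dalg := (![1, 0, 0], ![-c, 0, 0])

/-- Membership in `𝔫 = span{e₂,e₃,η₂,η₃}`, the `(−1)`-eigenspace of the involution
`θ(α+x) = σ*(α) + σ(x)` with `σ = diag(1,−1,−1)`. -/
def memNd (X : Dalg) : Prop := X.1 0 = 0 ∧ X.2 0 = 0

/-!
The coefficient `-c` in `Z = e₁ - cη₁` is chosen so that `ad η₁` cancels the cocycle part of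
`ad e₁`: on all of `𝔡` the endomorphism `J = ad Z` is the untwisted action of `e₁`, which swaps
`e₂, e₃` and sends `η₂, η₃` to `-η₃, -η₂`. Hence `J` is an involution of `𝔫`. It preserves `𝔫`
because `θ` is an automorphism fixing `Z`, and it is skew because `⟨[X, Y], W⟩` is alternating:
its cocycle part is `c` times the triple product in `ℝ³`, and the remaining terms are coadjoint
pairings.
-/

section Invariance

open scoped Matrix

lemma slBr_swap (u v : Fin 3 → ℝ) : slBr v u = -slBr u v := by
  ext i
  fin_cases i <;> simp [slBr] <;> ring

lemma coadBr_dotProduct (a u v : Fin 3 → ℝ) : coadBr a u ⬝ᵥ v = a ⬝ᵥ slBr u v := by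
  simp only [coadBr, slBr, Matrix.vec3_dotProduct, Matrix.cons_val]
  ring

lemma dBr_eq_crossProduct (c : ℝ) (X Y : Dalg) :
    dBr c X Y = (slBr X.1 Y.1, c • (X.1 ⨯₃ Y.1) + coadBr X.2 Y.1 - coadBr Y.2 X.1) := by
  simp only [dBr, cross_apply, neg_sub]

lemma dForm_eq_dotProduct (X Y : Dalg) : dForm X Y = X.2 ⬝ᵥ Y.1 + Y.2 ⬝ᵥ X.1 :=
  rfl

lemma dForm_comm (X Y : Dalg) : dForm X Y = dForm Y X :=
  add_comm _ _

lemma dForm_dBr (c : ℝ) (X Y W : Dalg) :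
    dForm (dBr c X Y) W =
      c * (X.1 ⨯₃ Y.1 ⬝ᵥ W.1) + X.2 ⬝ᵥ slBr Y.1 W.1 - Y.2 ⬝ᵥ slBr X.1 W.1
        + W.2 ⬝ᵥ slBr X.1 Y.1 := by
  simp only [dForm_eq_dotProduct, dBr_eq_crossProduct, sub_dotProduct, add_dotProduct,
    smul_dotProduct, smul_eq_mul, coadBr_dotProduct]

lemma dForm_dBr_swap (c : ℝ) (X Y W : Dalg) :
    dForm (dBr c X W) Y = -dForm (dBr c X Y) W := by
  have triple_swap : X.1 ⨯₃ W.1 ⬝ᵥ Y.1 = -(X.1 ⨯₃ Y.1 ⬝ᵥ W.1) := by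
    rw [← cross_anticomm, neg_dotProduct, dotProduct_comm, triple_product_permutation,
      dotProduct_comm]
  rw [dForm_dBr, dForm_dBr, triple_swap, slBr_swap Y.1 W.1, dotProduct_neg]
  ring

theorem dForm_dBr_add_dForm_dBr (c : ℝ) (X Y W : Dalg) :
    dForm (dBr c X Y) W + dForm Y (dBr c X W) = 0 := by
  rw [dForm_comm Y, dForm_dBr_swap c X Y W, add_neg_cancel]

end Invariance

section Involution

open scoped Matrix

/-- The diagonal of the involution `σ = diag(1,-1,-1)` of `𝔰𝔩(2,ℝ)`, so that `σ(u)` is the pointwise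
product `sigma * u`. As `σ` is diagonal, `σ*` has the same coordinates in the dual basis. -/
def sigma : Fin 3 → ℝ := ![1, -1, -1]

/-- The involution `θ(α+x) = σ*(α) + σ(x)` of `𝔡`. -/
def theta (X : Dalg) : Dalg := (sigma * X.1, sigma * X.2)

lemma slBr_sigma_mul (u v : Fin 3 → ℝ) :
    slBr (sigma * u) (sigma * v) = sigma * slBr u v := by
  ext i
  fin_cases i <;> simp [slBr, sigma] <;> ring

lemma coadBr_sigma_mul (a v : Fin 3 → ℝ) :
    coadBr (sigma * a) (sigma * v) = sigma * coadBr a v := by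
  ext i
  fin_cases i <;> simp [coadBr, sigma] <;> ring

lemma cross_sigma_mul (u v : Fin 3 → ℝ) :
    (sigma * u) ⨯₃ (sigma * v) = sigma * (u ⨯₃ v) := by
  ext i
  fin_cases i <;> simp [cross_apply, sigma] <;> ring

theorem theta_dBr (c : ℝ) (X Y : Dalg) : theta (dBr c X Y) = dBr c (theta X) (theta Y) := by
  simp only [theta, dBr_eq_crossProduct, slBr_sigma_mul, coadBr_sigma_mul, cross_sigma_mul,
    mul_sub, mul_add, mul_smul_comm]

lemma dBr_neg_right (c : ℝ) (X Y : Dalg) : dBr c X (-Y) = -dBr c X Y := by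
  ext i <;> fin_cases i <;> simp [dBr, slBr, coadBr] <;> ring

lemma memNd_iff_theta_eq_neg (X : Dalg) : memNd X ↔ theta X = -X := by
  simp [memNd, theta, sigma, Prod.ext_iff, funext_iff, Fin.forall_fin_succ, self_eq_neg]

theorem memNd_dBr_of_theta_eq_self {X Y : Dalg} (c : ℝ) (hX : theta X = X) (hY : memNd Y) :
    memNd (dBr c X Y) := by
  rw [memNd_iff_theta_eq_neg] at hY ⊢
  rw [theta_dBr, hX, hY, dBr_neg_right]

end Involution

section Zelt

lemma theta_Zelt (c : ℝ) : theta (Zelt c) = Zelt c := by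
  ext i <;> fin_cases i <;> simp [theta, sigma, Zelt]

lemma dBr_Zelt (c : ℝ) (X : Dalg) :
    dBr c (Zelt c) X = (![0, X.1 2, X.1 1], ![0, -X.2 2, -X.2 1]) := by
  ext i <;> fin_cases i <;> simp [dBr, Zelt, slBr, coadBr]

theorem dBr_Zelt_dBr_Zelt {X : Dalg} (c : ℝ) (hX : memNd X) :
    dBr c (Zelt c) (dBr c (Zelt c) X) = X := by
  obtain ⟨hx, ha⟩ := hX
  rw [dBr_Zelt, dBr_Zelt]
  ext i <;> fin_cases i <;> simp [hx, ha]

end Zelt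

/-- In the quadratic extension `𝔡 = 𝔰𝔩(2,ℝ) ⊕ 𝔰𝔩(2,ℝ)*` with involution
`θ(α+x) = σ*(α) + σ(x)`, `σ = diag(1,−1,−1)`, let `𝔥 = span{e₁,η₁}` and
`𝔫 = span{e₂,e₃,η₂,η₃}` be the `±1`-eigenspaces of `θ`.  Then `J = ad_Z`,
`Z = e₁ − cη₁`, preserves `𝔫`, satisfies `J² = id` on `𝔫` and
`⟨JX,Y⟩ + ⟨X,JY⟩ = 0` for all `X,Y ∈ 𝔫`; hence `(𝔡,𝔥,θ)` with `J` and `⟨,⟩|_𝔫`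
is a (non-semisimple) para-Hermitian symmetric system. -/
theorem dalg_paraHermitian_symmetric_system (c : ℝ) (hc : c ≠ 0) :
    (∀ X : Dalg, memNd X → memNd (dBr c (Zelt c) X)) ∧
    (∀ X : Dalg, memNd X → dBr c (Zelt c) (dBr c (Zelt c) X) = X) ∧
    (∀ X Y : Dalg, memNd X → memNd Y →
      dForm (dBr c (Zelt c) X) Y + dForm X (dBr c (Zelt c) Y) = 0) :=
  ⟨fun _ hX => memNd_dBr_of_theta_eq_self c (theta_Zelt c) hX,
    fun _ hX => dBr_Zelt_dBr_Zelt c hX,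
    fun X Y _ _ => dForm_dBr_add_dForm_dBr c (Zelt c) X Y⟩
end
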